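/- arXiv:1905.10973 — 4 statements merged into one kernel-verified Lean document; each statement's English description precedes it below -/
import Mathlib

section
/- Let a, b, c be nonnegative integers with a+1 ≥ b, a+1 ≥ c, b+1 ≥ c and c ≥ 1. Then H_comb(a,b,c) = H_comb(a+2,b+2,c−2) + (qt)^c · h₂(a+c, b−c) + (qt)^{c−1} · h₂(a+c, b−c+2) + ∑_{ℓ=2}^{min(2c, a−b)} q^{a+2c−ℓ} t^{ℓ+b} − [a = b−1]·q^{a+2c} t^{b} − ([a = b] + [a = b−1])·q^{a+2c−1} t^{b+1}, where [P] equals 1 if the condition P holds and 0 otherwise, and a sum over an empty range of integers is zero. -/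
open Finset

noncomputable section

/-- The field `ℚ(q,t)` of rational functions in two variables over `ℚ`. -/
abbrev K : Type := FractionRing (MvPolynomial (Fin 2) ℚ)

/-- The variable `q` in `ℚ(q,t)`. -/
def q : K := algebraMap (MvPolynomial (Fin 2) ℚ) K (MvPolynomial.X 0)

/-- The variable `t` in `ℚ(q,t)`. -/
def t : K := algebraMap (MvPolynomial (Fin 2) ℚ) K (MvPolynomial.X 1)

/-- The quasihead index set
`Q̃(a,b,c) = {(i,j) : 0 ≤ j ≤ c, j ≤ i ≤ b+c, 2i+2j ≤ a+b+2c−m_{cj}}`,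
where `m_{cj} = (c − j) mod 2`. -/
def Qtilde (a b c : ℤ) : Finset (ℤ × ℤ) :=
  (Finset.Icc 0 (b + c) ×ˢ Finset.Icc 0 c).filter
    (fun p => p.2 ≤ p.1 ∧ 2 * p.1 + 2 * p.2 ≤ a + b + 2 * c - (c - p.2) % 2)

/-- `H_comb(a,b,c) = ∑_{(i,j) ∈ Q̃(a,b,c)} q^{A−2i−j} t^{i+ε_{ij}}`, with
`A = a+2b+3c` and `ε_{ij} = max(0, i+j−b−c)`. -/
def Hcomb (a b c : ℤ) : K :=
  ∑ p ∈ Qtilde a b c,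
    q ^ (a + 2 * b + 3 * c - 2 * p.1 - p.2) * t ^ (p.1 + max 0 (p.1 + p.2 - b - c))

/-- `h₂(a,b) = q^a ∑_{i=0}^{b} q^{2(b−i)} t^i` (zero for `b = −1`). -/
def h₂ (a b : ℤ) : K :=
  q ^ a * ∑ i ∈ Finset.Icc (0 : ℤ) b, q ^ (2 * (b - i)) * t ^ i

theorem q_ne : q ≠ 0 := by
  unfold q
  simp [MvPolynomial.X_ne_zero]

theorem t_ne : t ≠ 0 := by
  unfold t
  simp [MvPolynomial.X_ne_zero]

/-- The general term of `Hcomb`. -/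
def term (a b c i j : ℤ) : K :=
  q ^ (a + 2 * b + 3 * c - 2 * i - j) * t ^ (i + max 0 (i + j - b - c))

/-- The recursion removes exactly the two rows `j = c - 1` and `j = c`. -/
theorem Hcomb_rows (a b c : ℤ) (hb : 0 ≤ b) (hc : 1 ≤ c) :
    Hcomb a b c = Hcomb (a + 2) (b + 2) (c - 2)
      + ∑ i ∈ Icc c (min (b + c) ((a + b) / 2)), term a b c i c
      + ∑ i ∈ Icc (c - 1) (min (b + c) ((a + b + 1) / 2)), term a b c i (c - 1) := by
  have e1 : Hcomb (a + 2) (b + 2) (c - 2)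
      = ∑ p ∈ (Qtilde a b c).filter (fun p => p.2 ≤ c - 2), term a b c p.1 p.2 := by
    unfold Hcomb
    apply Finset.sum_congr
    · ext ⟨i, j⟩
      simp only [Qtilde, mem_filter, mem_product, mem_Icc]
      omega
    · rintro ⟨i, j⟩ -
      simp only [term]
      congr 2
      · ring
      · congr 2; ring
  have e2 : ∑ i ∈ Icc c (min (b + c) ((a + b) / 2)), term a b c i c
      = ∑ p ∈ ((Qtilde a b c).filter (fun p => ¬ p.2 ≤ c - 2)).filter (fun p => p.2 = c),
          term a b c p.1 p.2 := by
    apply Finset.sum_nbij' (fun i => (i, c)) (fun p => p.1)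
    · intro i
      simp only [Qtilde, mem_filter, mem_product, mem_Icc, and_true]
      omega
    · rintro ⟨i, j⟩
      simp only [Qtilde, mem_filter, mem_product, mem_Icc]
      omega
    · intro i _; rfl
    · rintro ⟨i, j⟩ h
      simp only [mem_filter] at h
      simp [h.2]
    · intro i _; rfl
  have e3 : ∑ i ∈ Icc (c - 1) (min (b + c) ((a + b + 1) / 2)), term a b c i (c - 1)
      = ∑ p ∈ ((Qtilde a b c).filter (fun p => ¬ p.2 ≤ c - 2)).filter (fun p => ¬ p.2 = c),
          term a b c p.1 p.2 := by
    apply Finset.sum_nbij' (fun i => (i, c - 1)) (fun p => p.1)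
    · intro i
      simp only [Qtilde, mem_filter, mem_product, mem_Icc]
      omega
    · rintro ⟨i, j⟩
      simp only [Qtilde, mem_filter, mem_product, mem_Icc]
      omega
    · intro i _; rfl
    · rintro ⟨i, j⟩ h
      simp only [Qtilde, mem_filter, mem_product, mem_Icc] at h
      have : j = c - 1 := by omega
      simp [this]
    · intro i _; rfl
  rw [e1, e2, e3, add_assoc, Finset.sum_filter_add_sum_filter_not,
    Finset.sum_filter_add_sum_filter_not]
  rfl

/-- A shifted `h₂` as a row sum. -/
theorem h₂_row (a n m : ℤ) :
    (q * t) ^ n * h₂ a m = ∑ i ∈ Icc n (m + n), q ^ (a + 2 * m + 3 * n - 2 * i) * t ^ i := by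
  unfold h₂
  rw [← mul_assoc, Finset.mul_sum]
  apply Finset.sum_nbij' (fun i => i + n) (fun i => i - n)
  · intro i; simp only [mem_Icc]; omega
  · intro i; simp only [mem_Icc]; omega
  · intro i _; ring
  · intro i _; ring
  · intro i _
    have h : a + 2 * m + 3 * n - 2 * (i + n) = n + a + 2 * (m - i) := by ring
    rw [h, zpow_add₀ q_ne, zpow_add₀ q_ne, zpow_add₀ t_ne, mul_zpow]
    ring

/-- Splitting an interval sum. -/
theorem sum_split (f : ℤ → K) (x y z : ℤ) (h1 : x ≤ y + 1) (h2 : y ≤ z) :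
    ∑ i ∈ Icc x z, f i = ∑ i ∈ Icc x y, f i + ∑ i ∈ Icc (y + 1) z, f i := by
  rw [← Finset.sum_union]
  · congr 1
    ext i; simp only [mem_union, mem_Icc]; omega
  · rw [Finset.disjoint_left]
    intro i; simp only [mem_Icc]; omega

/-- The row `j = c`. -/
theorem row_c (a b c : ℤ) (hc : 1 ≤ c) (hab : b ≤ a + 1) (hac : c ≤ a + 1) (hbc : c ≤ b + 1) :
    ∑ i ∈ Icc c (min (b + c) ((a + b) / 2)), term a b c i c
      = (q * t) ^ c * h₂ (a + c) (b - c)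
        + ∑ i ∈ Icc (b + 1) (min (b + c) ((a + b) / 2)), term a b c i c
        - (if a = b - 1 then (1 : K) else 0) * (q ^ (a + 2 * c) * t ^ b) := by
  have hh : (q * t) ^ c * h₂ (a + c) (b - c) = ∑ i ∈ Icc c b, term a b c i c := by
    rw [h₂_row]
    apply Finset.sum_congr
    · congr 1; ring
    · intro i hi
      rw [mem_Icc] at hi
      unfold term
      rw [max_eq_left (by omega)]
      congr 2 <;> ring
  rw [hh]
  by_cases h : a = b - 1
  · have h1 : min (b + c) ((a + b) / 2) = b - 1 := by omega
    rw [h1, if_pos h, sum_split _ c (b - 1) b (by omega) (by omega), Finset.Icc_eq_empty (by omega : ¬ b + 1 ≤ b - 1)]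
    simp only [sub_add_cancel, Icc_self, sum_singleton, sum_empty, term]
    rw [max_eq_left (by omega)]
    have : a + 2 * b + 3 * c - 2 * b - c = a + 2 * c := by ring
    rw [this]; ring_nf
  · rw [if_neg h, sum_split _ c b _ (by omega) (by omega)]
    ring

/-- The row `j = c - 1`. -/
theorem row_c' (a b c : ℤ) (hc : 1 ≤ c) (hab : b ≤ a + 1) (hac : c ≤ a + 1) (hbc : c ≤ b + 1) :
    ∑ i ∈ Icc (c - 1) (min (b + c) ((a + b + 1) / 2)), term a b c i (c - 1)
      = (q * t) ^ (c - 1) * h₂ (a + c) (b - c + 2)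
        + ∑ i ∈ Icc (b + 2) (min (b + c) ((a + b + 1) / 2)), term a b c i (c - 1)
        - ((if a = b then (1 : K) else 0) + (if a = b - 1 then (1 : K) else 0))
            * (q ^ (a + 2 * c - 1) * t ^ (b + 1)) := by
  have hh : (q * t) ^ (c - 1) * h₂ (a + c) (b - c + 2)
      = ∑ i ∈ Icc (c - 1) (b + 1), term a b c i (c - 1) := by
    rw [h₂_row]
    apply Finset.sum_congr
    · congr 1; ring
    · intro i hi
      rw [mem_Icc] at hi
      unfold term
      rw [max_eq_left (by omega)]
      congr 2 <;> ring
  rw [hh]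
  by_cases h : a = b ∨ a = b - 1
  · have h1 : min (b + c) ((a + b + 1) / 2) = b := by omega
    have h2 : ((if a = b then (1 : K) else 0) + (if a = b - 1 then (1 : K) else 0)) = 1 := by
      rcases h with h | h
      · rw [if_pos h, if_neg (by omega)]; ring
      · rw [if_neg (by omega), if_pos h]; ring
    rw [h1, h2, sum_split _ (c - 1) b (b + 1) (by omega) (by omega),
      Finset.Icc_eq_empty (by omega : ¬ b + 2 ≤ b)]
    simp only [Icc_self, sum_singleton, sum_empty, term]
    rw [max_eq_left (by omega)]
    have : a + 2 * b + 3 * c - 2 * (b + 1) - (c - 1) = a + 2 * c - 1 := by ring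
    rw [this]; ring_nf
  · push Not at h
    rw [if_neg h.1, if_neg h.2, sum_split _ (c - 1) (b + 1) _ (by omega) (by omega)]
    have : b + 1 + 1 = b + 2 := by ring
    rw [this]
    ring

/-- The leftover terms of the two rows, combined by the parity of `l`. -/
theorem extras (a b c : ℤ) :
    ∑ l ∈ Icc (2 : ℤ) (min (2 * c) (a - b)), q ^ (a + 2 * c - l) * t ^ (l + b)
      = ∑ i ∈ Icc (b + 1) (min (b + c) ((a + b) / 2)), term a b c i c
        + ∑ i ∈ Icc (b + 2) (min (b + c) ((a + b + 1) / 2)), term a b c i (c - 1) := by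
  rw [← Finset.sum_filter_add_sum_filter_not _ (fun l : ℤ => l % 2 = 0)]
  congr 1
  · symm
    apply Finset.sum_nbij' (fun i => 2 * (i - b)) (fun l => l / 2 + b)
    · intro i; simp only [mem_filter, mem_Icc]; omega
    · intro i; simp only [mem_filter, mem_Icc]; omega
    · intro i; simp only [mem_Icc]; omega
    · intro i; simp only [mem_filter, mem_Icc]; omega
    · intro i hi
      rw [mem_Icc] at hi
      unfold term
      rw [max_eq_right (by omega)]
      congr 2 <;> ring
  · symm
    apply Finset.sum_nbij' (fun i => 2 * (i - b) - 1) (fun l => (l + 1) / 2 + b)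
    · intro i; simp only [mem_filter, mem_Icc]; omega
    · intro i; simp only [mem_filter, mem_Icc]; omega
    · intro i; simp only [mem_Icc]; omega
    · intro i; simp only [mem_filter, mem_Icc]; omega
    · intro i hi
      rw [mem_Icc] at hi
      unfold term
      rw [max_eq_right (by omega)]
      congr 2 <;> ring

theorem Hcomb_recursion (a b c : ℤ) (ha : 0 ≤ a) (hb : 0 ≤ b) (hc : 1 ≤ c)
    (hab : b ≤ a + 1) (hac : c ≤ a + 1) (hbc : c ≤ b + 1) :
    Hcomb a b c
      = Hcomb (a + 2) (b + 2) (c - 2)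
        + (q * t) ^ c * h₂ (a + c) (b - c)
        + (q * t) ^ (c - 1) * h₂ (a + c) (b - c + 2)
        + (∑ l ∈ Finset.Icc (2 : ℤ) (min (2 * c) (a - b)),
            q ^ (a + 2 * c - l) * t ^ (l + b))
        - (if a = b - 1 then (1 : K) else 0) * (q ^ (a + 2 * c) * t ^ b)
        - ((if a = b then (1 : K) else 0) + (if a = b - 1 then (1 : K) else 0))
            * (q ^ (a + 2 * c - 1) * t ^ (b + 1)) := by
  rw [Hcomb_rows a b c hb hc, row_c a b c hc hab hac hbc, row_c' a b c hc hab hac hbc,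
    extras a b c]
  ring
end
end

section
/- For all integers a, b and every integer c ≥ 0, the identity H₃(a,b,c) = H₃(a+1, b+1, c−1) + (qt)^c · H₂(a+c, b−c) + ∑_{i=0}^{c−1} (qt)^{b+2c−2i} · q^{a−b−2c+4i} holds in the field ℚ(q,t). -/
open Finset

noncomputable section

/-- `H₂(a,b)` as a function of the two variables `x`, `y` (so that interchanging the
arguments interchanges `q` and `t`):
`H₂(a,b;x,y) = x^{a+2b}/(1 − y/x²) + x^a y^b/(1 − x²/y)`. -/
def H₂ (a b : ℤ) (x y : K) : K :=
  x ^ (a + 2 * b) / (1 - y / x ^ 2) + x ^ a * y ^ b / (1 - x ^ 2 / y)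

/-- `H₃(a,b,c;x,y)`, the head-like standard-tableau expansion for `n = 4`. -/
def H₃ (a b c : ℤ) (x y : K) : K :=
  x ^ (a + 2 * b + 3 * c) / ((1 - y / x ^ 2) * (1 - y / x ^ 3))
    + x ^ (a + 2 * b) * y ^ c / ((1 - y / x ^ 2) * (1 - x ^ 3 / y))
    + x ^ (a + 2 * c) * y ^ b * (1 - y) / ((1 - y ^ 2 / x ^ 2) * (1 - x ^ 2 / y) * (1 - y / x))
    + x ^ a * y ^ (b + 2 * c) / ((1 - x ^ 2 / y ^ 2) * (1 - x / y))
    + x ^ (a + c) * y ^ (b + c) * (1 - x) / ((1 - x ^ 2 / y) * (1 - x / y) * (1 - y / x))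

/-- `F₁(m) = (q^{m+1} − t^{m+1})/(q − t)`, the function `F(a)` of the paper. -/
def F₁ (m : ℤ) : K := (q ^ (m + 1) - t ^ (m + 1)) / (q - t)

/-- `F₂(a,b) = H₂(a,b;q,t)/(1 − t/q) + H₂(a,b;t,q)/(1 − q/t)`. -/
def F₂ (a b : ℤ) : K := H₂ a b q t / (1 - t / q) + H₂ a b t q / (1 - q / t)

/-- `F₃(a,b,c) = H₃(a,b,c;q,t)/(1 − t/q) + H₃(a,b,c;t,q)/(1 − q/t)`. -/
def F₃ (a b c : ℤ) : K := H₃ a b c q t / (1 - t / q) + H₃ a b c t q / (1 - q / t)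

theorem q_t_ne (p : MvPolynomial (Fin 2) ℚ) (hp : MvPolynomial.eval (fun i : Fin 2 => if i = 0 then (3 : ℚ) else 7) p ≠ 0) :
    algebraMap (MvPolynomial (Fin 2) ℚ) K p ≠ 0 := by
  intro h
  have h0 : p = 0 := by
    apply IsFractionRing.injective (MvPolynomial (Fin 2) ℚ) K
    rw [h, map_zero]
  exact hp (by rw [h0, map_zero])

theorem geom_aux {F : Type*} [Field F] (x y : F) (hx : x ≠ 0) (hy : y ≠ 0)
    (h : y ^ 2 - x ^ 2 ≠ 0) (a b : ℤ) (c : ℕ) :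
    ∑ i ∈ Finset.Icc (0 : ℤ) ((c : ℤ) - 1),
      (x * y) ^ (b + 2 * (c : ℤ) - 2 * i) * x ^ (a - b - 2 * (c : ℤ) + 4 * i)
      = x ^ a * y ^ b * ((y ^ c) ^ 2 - (x ^ c) ^ 2) * y ^ 2 / (y ^ 2 - x ^ 2) := by
  have h1 : ∀ n : ℕ, ∀ d : ℤ, ∑ i ∈ Finset.Icc (0 : ℤ) ((n : ℤ) - 1),
      (x * y) ^ (d - 2 * i) * x ^ (a - d + 4 * i)
      = x ^ a * y ^ d * (1 - (x ^ n) ^ 2 / (y ^ n) ^ 2) * y ^ 2 / (y ^ 2 - x ^ 2) := by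
    intro n d
    induction n with
    | zero => simp
    | succ n ih =>
      have e : Finset.Icc (0 : ℤ) (((n + 1 : ℕ) : ℤ) - 1)
          = insert (n : ℤ) (Finset.Icc (0 : ℤ) ((n : ℤ) - 1)) := by
        ext i
        simp only [Finset.mem_Icc, Finset.mem_insert]
        omega
      rw [e, Finset.sum_insert (by simp), ih]
      have e2 : (x * y) ^ (d - 2 * (n : ℤ)) * x ^ (a - d + 4 * (n : ℤ))
          = x ^ a * y ^ d * ((x ^ n) ^ 2 / (y ^ n) ^ 2) := by
        rw [mul_zpow, mul_right_comm, ← zpow_add₀ hx,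
          show d - 2 * (n : ℤ) + (a - d + 4 * (n : ℤ)) = a + n * 2 by ring,
          zpow_add₀ hx, zpow_sub₀ hy, mul_comm 2 (n : ℤ), zpow_mul, zpow_mul]
        simp only [zpow_natCast, zpow_ofNat]
        ring
      rw [e2]
      have hyn : y ^ n ≠ 0 := pow_ne_zero _ hy
      rw [pow_succ x n, pow_succ y n]
      generalize y ^ n = Y at *
      generalize x ^ n = X at *
      field_simp
      ring
  have h2 := h1 c (b + 2 * c)
  have e3 : ∀ i : ℤ, a - (b + 2 * (c : ℤ)) + 4 * i = a - b - 2 * (c : ℤ) + 4 * i := by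
    intro i; ring
  simp only [e3] at h2
  rw [h2, zpow_add₀ hy, mul_comm 2 (c : ℤ), zpow_mul]
  simp only [zpow_natCast, zpow_ofNat]
  have hyn : y ^ c ≠ 0 := pow_ne_zero _ hy
  field_simp

theorem main_aux {F : Type*} [Field F] (x y A B E C D : F) (hx : x ≠ 0) (hy : y ≠ 0)
    (hC : C ≠ 0) (hD : D ≠ 0)
    (h1 : x - y ≠ 0) (h2 : x ^ 2 - y ≠ 0) (h3 : x ^ 3 - y ≠ 0) (h4 : x + y ≠ 0) :
    A * B ^ 2 * C ^ 3 / ((1 - y / x ^ 2) * (1 - y / x ^ 3))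
    + A * B ^ 2 * D / ((1 - y / x ^ 2) * (1 - x ^ 3 / y))
    + A * C ^ 2 * E * (1 - y) / ((1 - y ^ 2 / x ^ 2) * (1 - x ^ 2 / y) * (1 - y / x))
    + A * (E * D ^ 2) / ((1 - x ^ 2 / y ^ 2) * (1 - x / y))
    + A * C * (E * D) * (1 - x) / ((1 - x ^ 2 / y) * (1 - x / y) * (1 - y / x))
    = (A * B ^ 2 * C ^ 3 / ((1 - y / x ^ 2) * (1 - y / x ^ 3))
    + A * B ^ 2 * x ^ 3 * (D / y) / ((1 - y / x ^ 2) * (1 - x ^ 3 / y))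
    + A * C ^ 2 / x * (E * y) * (1 - y) / ((1 - y ^ 2 / x ^ 2) * (1 - x ^ 2 / y) * (1 - y / x))
    + A * x * (E * D ^ 2 / y) / ((1 - x ^ 2 / y ^ 2) * (1 - x / y))
    + A * C * (E * D) * (1 - x) / ((1 - x ^ 2 / y) * (1 - x / y) * (1 - y / x)))
    + C * D * (A * B ^ 2 / C / (1 - y / x ^ 2) + A * C * (E / D) / (1 - x ^ 2 / y))
    + A * E * (D ^ 2 - C ^ 2) * y ^ 2 / (y ^ 2 - x ^ 2) := by
  have n1 : 1 - y / x ^ 2 = (x ^ 2 - y) / x ^ 2 := by field_simp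
  have n2 : 1 - y / x ^ 3 = (x ^ 3 - y) / x ^ 3 := by field_simp
  have n3 : 1 - x ^ 3 / y = - (x ^ 3 - y) / y := by field_simp; ring
  have n4 : 1 - y ^ 2 / x ^ 2 = (x - y) * (x + y) / x ^ 2 := by field_simp; ring
  have n5 : 1 - x ^ 2 / y = - (x ^ 2 - y) / y := by field_simp; ring
  have n6 : 1 - y / x = (x - y) / x := by field_simp
  have n7 : 1 - x ^ 2 / y ^ 2 = - ((x - y) * (x + y)) / y ^ 2 := by field_simp; ring
  have n8 : 1 - x / y = - (x - y) / y := by field_simp; ring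
  have n9 : y ^ 2 - x ^ 2 = - ((x - y) * (x + y)) := by ring
  rw [n1, n2, n3, n4, n5, n6, n7, n8, n9]
  have e1 : A * B ^ 2 * D / ((x ^ 2 - y) / x ^ 2 * (-(x ^ 3 - y) / y))
      = A * B ^ 2 * x ^ 3 * (D / y) / ((x ^ 2 - y) / x ^ 2 * (-(x ^ 3 - y) / y))
      + C * D * (A * B ^ 2 / C / ((x ^ 2 - y) / x ^ 2)) := by
    field_simp
    ring
  have e2 : A * C ^ 2 * E * (1 - y) /
        ((x - y) * (x + y) / x ^ 2 * (-(x ^ 2 - y) / y) * ((x - y) / x))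
      = A * C ^ 2 / x * (E * y) * (1 - y) /
        ((x - y) * (x + y) / x ^ 2 * (-(x ^ 2 - y) / y) * ((x - y) / x))
      + C * D * (A * C * (E / D) / (-(x ^ 2 - y) / y))
      + A * E * (- C ^ 2) * y ^ 2 / (-((x - y) * (x + y))) := by
    field_simp
    ring
  have e3 : A * (E * D ^ 2) / (-((x - y) * (x + y)) / y ^ 2 * (-(x - y) / y))
      = A * x * (E * D ^ 2 / y) / (-((x - y) * (x + y)) / y ^ 2 * (-(x - y) / y))
      + A * E * D ^ 2 * y ^ 2 / (-((x - y) * (x + y))) := by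
    field_simp
    ring
  rw [e1, e2, e3]
  ring

theorem H₃_recursion (a b c : ℤ) (hc : 0 ≤ c) :
    H₃ a b c q t
      = H₃ (a + 1) (b + 1) (c - 1) q t
        + (q * t) ^ c * H₂ (a + c) (b - c) q t
        + ∑ i ∈ Finset.Icc (0 : ℤ) (c - 1),
            (q * t) ^ (b + 2 * c - 2 * i) * q ^ (a - b - 2 * c + 4 * i) := by
  have hq : q ≠ 0 := q_t_ne _ (by simp)
  have ht : t ≠ 0 := q_t_ne _ (by simp)
  have h1 : q - t ≠ 0 := by
    have := q_t_ne (MvPolynomial.X 0 - MvPolynomial.X 1) (by simp; norm_num)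
    simpa only [q, t, map_sub] using this
  have h2 : q ^ 2 - t ≠ 0 := by
    have := q_t_ne (MvPolynomial.X 0 ^ 2 - MvPolynomial.X 1) (by simp; norm_num)
    simpa only [q, t, map_sub, map_pow] using this
  have h3 : q ^ 3 - t ≠ 0 := by
    have := q_t_ne (MvPolynomial.X 0 ^ 3 - MvPolynomial.X 1) (by simp; norm_num)
    simpa only [q, t, map_sub, map_pow] using this
  have h4 : q + t ≠ 0 := by
    have := q_t_ne (MvPolynomial.X 0 + MvPolynomial.X 1) (by simp; norm_num)
    simpa only [q, t, map_add] using this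
  have h5 : t ^ 2 - q ^ 2 ≠ 0 := by
    have : t ^ 2 - q ^ 2 = - ((q - t) * (q + t)) := by ring
    rw [this]
    exact neg_ne_zero.mpr (mul_ne_zero h1 h4)
  lift c to ℕ using hc
  rw [geom_aux q t hq ht h5]
  have key := main_aux q t (q ^ a) (q ^ b) (t ^ b) (q ^ c) (t ^ c) hq ht
    (pow_ne_zero _ hq) (pow_ne_zero _ ht) h1 h2 h3 h4
  have z2 : ∀ (x : K) (n : ℤ), x ^ (2 * n) = (x ^ n) ^ 2 := by
    intro x n; rw [mul_comm, zpow_mul]; norm_cast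
  have z3 : ∀ (x : K) (n : ℤ), x ^ (3 * n) = (x ^ n) ^ 3 := by
    intro x n; rw [mul_comm, zpow_mul]; norm_cast
  have a1 : q ^ (a + 2 * b + 3 * (c : ℤ)) = q ^ a * (q ^ b) ^ 2 * (q ^ c) ^ 3 := by
    rw [zpow_add₀ hq, zpow_add₀ hq, z2, z3, zpow_natCast]
  have a2 : q ^ (a + 2 * b) = q ^ a * (q ^ b) ^ 2 := by
    rw [zpow_add₀ hq, z2]
  have a3 : q ^ (a + 2 * (c : ℤ)) = q ^ a * (q ^ c) ^ 2 := by
    rw [zpow_add₀ hq, z2, zpow_natCast]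
  have a4 : t ^ (b + 2 * (c : ℤ)) = t ^ b * (t ^ c) ^ 2 := by
    rw [zpow_add₀ ht, z2, zpow_natCast]
  have a5 : q ^ (a + (c : ℤ)) = q ^ a * q ^ c := by rw [zpow_add₀ hq, zpow_natCast]
  have a6 : t ^ (b + (c : ℤ)) = t ^ b * t ^ c := by rw [zpow_add₀ ht, zpow_natCast]
  have b1 : a + 1 + 2 * (b + 1) + 3 * ((c : ℤ) - 1) = a + 2 * b + 3 * c := by ring
  have b2 : q ^ (a + 1 + 2 * (b + 1)) = q ^ a * (q ^ b) ^ 2 * q ^ 3 := by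
    rw [show a + 1 + 2 * (b + 1) = a + 2 * b + 3 by ring, zpow_add₀ hq, a2]; norm_cast
  have b3 : t ^ ((c : ℤ) - 1) = t ^ c / t := by rw [zpow_sub₀ ht, zpow_natCast, zpow_one]
  have b4 : q ^ (a + 1 + 2 * ((c : ℤ) - 1)) = q ^ a * (q ^ c) ^ 2 / q := by
    rw [show a + 1 + 2 * ((c : ℤ) - 1) = a + 2 * c - 1 by ring, zpow_sub₀ hq, a3, zpow_one]
  have b5 : t ^ (b + 1) = t ^ b * t := by rw [zpow_add₀ ht, zpow_one]
  have b6 : q ^ (a + 1) = q ^ a * q := by rw [zpow_add₀ hq, zpow_one]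
  have b7 : t ^ (b + 1 + 2 * ((c : ℤ) - 1)) = t ^ b * (t ^ c) ^ 2 / t := by
    rw [show b + 1 + 2 * ((c : ℤ) - 1) = b + 2 * c - 1 by ring, zpow_sub₀ ht, a4, zpow_one]
  have b8 : a + 1 + ((c : ℤ) - 1) = a + c := by ring
  have b9 : b + 1 + ((c : ℤ) - 1) = b + c := by ring
  have c1 : (q * t) ^ (c : ℤ) = q ^ c * t ^ c := by rw [zpow_natCast, mul_pow]
  have c2 : q ^ (a + (c : ℤ) + 2 * (b - c)) = q ^ a * (q ^ b) ^ 2 / q ^ c := by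
    rw [show a + (c : ℤ) + 2 * (b - c) = a + 2 * b - c by ring, zpow_sub₀ hq, a2, zpow_natCast]
  have c3 : t ^ (b - (c : ℤ)) = t ^ b / t ^ c := by rw [zpow_sub₀ ht, zpow_natCast]
  unfold H₃ H₂
  rw [b1, b8, b9, a1, a2, a3, a4, a5, a6, b2, b3, b4, b5, b6, b7, c1, c2, c3, zpow_natCast]
  exact key
end
end

section
/- For all integers a, b and every integer c ≥ 0, the identity F₃(a,b,c) = F₃(a+1, b+1, c−1) + (qt)^c · F₂(a+c, b−c) + ∑_{i=0}^{c−1} (qt)^{b+2c−2i} · F₁(a−b−2c+4i) holds in the field ℚ(q,t). -/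
open Finset

noncomputable section

/-- Distinct polynomials give distinct elements of the fraction field. -/
theorem algMap_ne {p r : MvPolynomial (Fin 2) ℚ} (v : Fin 2 → ℚ)
    (h : MvPolynomial.eval v p ≠ MvPolynomial.eval v r) :
    algebraMap (MvPolynomial (Fin 2) ℚ) K p ≠ algebraMap (MvPolynomial (Fin 2) ℚ) K r := by
  intro e
  exact h (by rw [IsFractionRing.injective (MvPolynomial (Fin 2) ℚ) K e])

/-- The geometric sum appearing in the recursion. -/
theorem geom_part (x y : K) (hx : x ≠ 0) (hy : y ≠ 0) (h : x ^ 2 - y ^ 2 ≠ 0) (a e : ℤ) (n : ℕ) :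
    ∑ i ∈ Finset.Icc (0 : ℤ) ((n : ℤ) - 1), x ^ (a + 2 * i) * y ^ (e - 2 * i)
      = (x ^ (a + 2 * n) * y ^ (e - 2 * n) - x ^ a * y ^ e) * y ^ 2 / (x ^ 2 - y ^ 2) := by
  induction n with
  | zero => simp
  | succ n ih =>
    have hI : Finset.Icc (0 : ℤ) (((n + 1 : ℕ) : ℤ) - 1)
        = insert (n : ℤ) (Finset.Icc (0 : ℤ) ((n : ℤ) - 1)) := by
      ext z; simp only [Finset.mem_Icc, Finset.mem_insert]; push_cast; omega
    rw [hI, Finset.sum_insert (by simp), ih]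
    have e1 : x ^ (a + 2 * ((n + 1 : ℕ) : ℤ)) = x ^ (a + 2 * (n : ℤ)) * x ^ 2 := by
      rw [← zpow_natCast x 2, ← zpow_add₀ hx]; congr 1; push_cast; ring
    have e2 : y ^ (e - 2 * (n : ℤ)) = y ^ (e - 2 * ((n + 1 : ℕ) : ℤ)) * y ^ 2 := by
      rw [← zpow_natCast y 2, ← zpow_add₀ hy]; congr 1; push_cast; ring
    rw [e1, e2]
    field_simp
    ring

/-- The recursion already holds before symmetrization. -/
theorem H₃_rec (x y : K) (hx : x ≠ 0) (hy : y ≠ 0) (h1 : x - y ≠ 0) (hp : x + y ≠ 0)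
    (h2 : x ^ 2 - y ≠ 0) (h3 : x ^ 3 - y ≠ 0) (a b c : ℤ) :
    H₃ a b c x y = H₃ (a + 1) (b + 1) (c - 1) x y + (x * y) ^ c * H₂ (a + c) (b - c) x y
      + (x ^ (a + 2 * c) * y ^ b - x ^ a * y ^ (b + 2 * c)) * y ^ 2 / (x ^ 2 - y ^ 2) := by
  have d2 : 1 - y / x ^ 2 = (x ^ 2 - y) / x ^ 2 := by field_simp
  have d3 : 1 - y / x ^ 3 = (x ^ 3 - y) / x ^ 3 := by field_simp
  have d3' : 1 - x ^ 3 / y = -(x ^ 3 - y) / y := by field_simp; ring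
  have d2' : 1 - x ^ 2 / y = -(x ^ 2 - y) / y := by field_simp; ring
  have d1 : 1 - y / x = (x - y) / x := by field_simp
  have d1' : 1 - x / y = -(x - y) / y := by field_simp; ring
  have ds : 1 - y ^ 2 / x ^ 2 = (x - y) * (x + y) / x ^ 2 := by field_simp; ring
  have ds' : 1 - x ^ 2 / y ^ 2 = -((x - y) * (x + y)) / y ^ 2 := by field_simp; ring
  have dd : x ^ 2 - y ^ 2 = (x - y) * (x + y) := by ring
  unfold H₃ H₂
  rw [d2, d3, d3', d2', d1, d1', ds, ds', dd, mul_zpow]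
  simp only [mul_add, mul_sub, two_mul, zpow_add₀ hx, zpow_add₀ hy, zpow_sub₀ hx, zpow_sub₀ hy,
    show (3 : ℤ) = 1 + 1 + 1 by norm_num, add_mul, one_mul, mul_one, zpow_one]
  have hA := zpow_ne_zero a hx
  have hB := zpow_ne_zero b hx
  have hC := zpow_ne_zero c hx
  have hB' := zpow_ne_zero b hy
  have hC' := zpow_ne_zero c hy
  generalize x ^ a = A at *
  generalize x ^ b = B at *
  generalize x ^ c = C at *
  generalize y ^ b = B' at *
  generalize y ^ c = C' at *
  field_simp
  ring

/-- One summand as an antisymmetrization. -/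
theorem term_eq (x y : K) (hx : x ≠ 0) (hy : y ≠ 0) (a b c i : ℤ) :
    (x * y) ^ (b + 2 * c - 2 * i) * x ^ (a - b - 2 * c + 4 * i + 1)
      = x * (x ^ (a + 2 * i) * y ^ (b + 2 * c - 2 * i)) := by
  have e : x ^ (b + 2 * c - 2 * i) * x ^ (a - b - 2 * c + 4 * i + 1) = x * x ^ (a + 2 * i) := by
    rw [← zpow_add₀ hx, ← zpow_one_add₀ hx]; congr 1; ring
  rw [mul_zpow]
  linear_combination y ^ (b + 2 * c - 2 * i) * e

theorem F₃_recursion (a b c : ℤ) (hc : 0 ≤ c) :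
    F₃ a b c
      = F₃ (a + 1) (b + 1) (c - 1)
        + (q * t) ^ c * F₂ (a + c) (b - c)
        + ∑ i ∈ Finset.Icc (0 : ℤ) (c - 1),
            (q * t) ^ (b + 2 * c - 2 * i) * F₁ (a - b - 2 * c + 4 * i) := by
  have N (p : MvPolynomial (Fin 2) ℚ) (v : Fin 2 → ℚ) (h : MvPolynomial.eval v p ≠ 0) :
      algebraMap (MvPolynomial (Fin 2) ℚ) K p ≠ 0 := by
    rw [← map_zero (algebraMap (MvPolynomial (Fin 2) ℚ) K)]
    exact algMap_ne v (by simpa using h)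
  have hq : q ≠ 0 := N (.X 0) ![2, 3] (by simp)
  have ht : t ≠ 0 := N (.X 1) ![2, 3] (by simp)
  have h1 : q - t ≠ 0 := by
    simpa only [q, t, map_sub, map_add, map_pow] using N (.X 0 - .X 1) ![2, 3] (by simp; norm_num)
  have hp : q + t ≠ 0 := by
    simpa only [q, t, map_sub, map_add, map_pow] using N (.X 0 + .X 1) ![2, 3] (by simp; norm_num)
  have h2 : q ^ 2 - t ≠ 0 := by
    rw [q, t, ← RingHom.map_pow, ← RingHom.map_sub]
    exact N (.X 0 ^ 2 - .X 1) ![2, 3] (by simp; norm_num)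
  have h3 : q ^ 3 - t ≠ 0 := by
    rw [q, t, ← RingHom.map_pow, ← RingHom.map_sub]
    exact N (.X 0 ^ 3 - .X 1) ![2, 3] (by simp; norm_num)
  have h2' : t ^ 2 - q ≠ 0 := by
    rw [q, t, ← RingHom.map_pow, ← RingHom.map_sub]
    exact N (.X 1 ^ 2 - .X 0) ![2, 3] (by simp; norm_num)
  have h3' : t ^ 3 - q ≠ 0 := by
    rw [q, t, ← RingHom.map_pow, ← RingHom.map_sub]
    exact N (.X 1 ^ 3 - .X 0) ![2, 3] (by simp; norm_num)
  have h1' : t - q ≠ 0 := by rw [← neg_sub]; exact neg_ne_zero.mpr h1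
  have hp' : t + q ≠ 0 := by rwa [add_comm]
  have hs : q ^ 2 - t ^ 2 ≠ 0 := by
    rw [show q ^ 2 - t ^ 2 = (q - t) * (q + t) by ring]; exact mul_ne_zero h1 hp
  have hs' : t ^ 2 - q ^ 2 ≠ 0 := by rw [← neg_sub]; exact neg_ne_zero.mpr hs
  obtain ⟨n, rfl⟩ := Int.eq_ofNat_of_zero_le hc
  have hsum : ∑ i ∈ Finset.Icc (0 : ℤ) ((n : ℤ) - 1),
      (q * t) ^ (b + 2 * (n : ℤ) - 2 * i) * F₁ (a - b - 2 * (n : ℤ) + 4 * i)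
      = (q * ((q ^ (a + 2 * (n : ℤ)) * t ^ b - q ^ a * t ^ (b + 2 * (n : ℤ))) * t ^ 2
            / (q ^ 2 - t ^ 2))
          - t * ((t ^ (a + 2 * (n : ℤ)) * q ^ b - t ^ a * q ^ (b + 2 * (n : ℤ))) * q ^ 2
            / (t ^ 2 - q ^ 2))) / (q - t) := by
    have g1 := geom_part q t hq ht hs a (b + 2 * n) n
    have g2 := geom_part t q ht hq hs' a (b + 2 * n) n
    rw [add_sub_cancel_right] at g1 g2
    rw [← g1, ← g2, Finset.mul_sum, Finset.mul_sum, ← Finset.sum_sub_distrib, Finset.sum_div]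
    refine Finset.sum_congr rfl fun i _ => ?_
    rw [← term_eq q t hq ht, ← term_eq t q ht hq, F₁, mul_comm t q]
    ring
  rw [hsum]
  have r1 := H₃_rec q t hq ht h1 hp h2 h3 a b n
  have r2 := H₃_rec t q ht hq h1' hp' h2' h3' a b n
  unfold F₃ F₂
  rw [r1, r2, mul_comm t q]
  have d1 : 1 - t / q = (q - t) / q := by field_simp
  have d2 : 1 - q / t = -(q - t) / t := by field_simp; ring
  rw [d1, d2, div_div_eq_mul_div, div_div_eq_mul_div, div_div_eq_mul_div, div_div_eq_mul_div,
    div_div_eq_mul_div, div_div_eq_mul_div]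
  simp only [div_neg]
  ring
end
end

section
/- In ℚ(q,t) the following vanishing statements hold: F₁(−1) = 0; F₂(a,−1) = 0 for every integer a ≥ −2; and F₃(a,b,−1) = 0 for all integers a ≥ 1 and b ≥ 1. -/
open Finset

noncomputable section

theorem H₂_neg_one (a : ℤ) (x y : K) (hx : x ≠ 0) (hy : y ≠ 0) (h2 : x ^ 2 - y ≠ 0) :
    H₂ a (-1) x y = 0 := by
  have h2' : y - x ^ 2 ≠ 0 := by
    intro h; apply h2; linear_combination -h
  have e1 : (1 : K) - y / x ^ 2 = (x ^ 2 - y) / x ^ 2 := by field_simp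
  have e2 : (1 : K) - x ^ 2 / y = -(x ^ 2 - y) / y := by field_simp; ring
  unfold H₂
  rw [e1, e2, zpow_add₀ hx, show (2 * (-1) : ℤ) = -2 by norm_num, zpow_neg, zpow_neg_one]
  norm_cast
  field_simp
  ring

theorem H₃_neg_one (a b : ℤ) (x y : K) (hx : x ≠ 0) (hy : y ≠ 0) (h1 : x - y ≠ 0)
    (hp : x + y ≠ 0) (h2 : x ^ 2 - y ≠ 0) (h3 : x ^ 3 - y ≠ 0) :
    H₃ a b (-1) x y = 0 := by
  have e1 : (1 : K) - y / x ^ 2 = (x ^ 2 - y) / x ^ 2 := by field_simp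
  have e2 : (1 : K) - x ^ 2 / y = -(x ^ 2 - y) / y := by field_simp; ring
  have e3 : (1 : K) - y / x ^ 3 = (x ^ 3 - y) / x ^ 3 := by field_simp
  have e4 : (1 : K) - x ^ 3 / y = -(x ^ 3 - y) / y := by field_simp; ring
  have e5 : (1 : K) - y / x = (x - y) / x := by field_simp
  have e6 : (1 : K) - x / y = -(x - y) / y := by field_simp; ring
  have e7 : (1 : K) - y ^ 2 / x ^ 2 = (x - y) * (x + y) / x ^ 2 := by field_simp; ring
  have e8 : (1 : K) - x ^ 2 / y ^ 2 = -((x - y) * (x + y)) / y ^ 2 := by field_simp; ring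
  unfold H₃
  rw [e1, e2, e3, e4, e5, e6, e7, e8]
  rw [zpow_add₀ hx (a + 2 * b), zpow_add₀ hx a (2 * (-1)), zpow_add₀ hx a (-1),
    zpow_add₀ hy b (2 * (-1)), zpow_add₀ hy b (-1),
    show (2 * (-1) : ℤ) = -(2 : ℕ) by norm_num, show (3 * (-1) : ℤ) = -(3 : ℕ) by norm_num]
  simp only [zpow_neg, zpow_natCast, zpow_one]
  generalize x ^ (a + 2 * b) = A
  generalize x ^ a = B
  generalize y ^ b = C
  field_simp
  ring

/-- A polynomial not vanishing at some rational point is nonzero in `K`. -/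
theorem algebraMap_ne_zero_of_eval (p : MvPolynomial (Fin 2) ℚ) (v : Fin 2 → ℚ)
    (h : MvPolynomial.eval v p ≠ 0) : algebraMap (MvPolynomial (Fin 2) ℚ) K p ≠ 0 := by
  intro h0
  have : p = 0 := (IsFractionRing.injective (MvPolynomial (Fin 2) ℚ) K) (by rw [h0, map_zero])
  exact h (by rw [this, map_zero])

theorem F_vanishing :
    F₁ (-1) = 0 ∧
    (∀ a : ℤ, -2 ≤ a → F₂ a (-1) = 0) ∧
    (∀ a b : ℤ, 1 ≤ a → 1 ≤ b → F₃ a b (-1) = 0) := by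
  have key := fun p => algebraMap_ne_zero_of_eval p ![2, 3]
  have hq : q ≠ 0 := key (MvPolynomial.X 0) (by simp)
  have ht : t ≠ 0 := key (MvPolynomial.X 1) (by simp)
  have h1 : q - t ≠ 0 := by
    have := key (MvPolynomial.X 0 - MvPolynomial.X 1) (by simp; norm_num)
    simpa only [q, t, map_sub] using this
  have h1' : t - q ≠ 0 := by
    have := key (MvPolynomial.X 1 - MvPolynomial.X 0) (by simp; norm_num)
    simpa only [q, t, map_sub] using this
  have hp : q + t ≠ 0 := by
    have := key (MvPolynomial.X 0 + MvPolynomial.X 1) (by simp; norm_num)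
    simpa only [q, t, map_add] using this
  have hp' : t + q ≠ 0 := by rwa [add_comm]
  have h2 : q ^ 2 - t ≠ 0 := by
    have := key (MvPolynomial.X 0 ^ 2 - MvPolynomial.X 1) (by simp; norm_num)
    simpa only [q, t, map_sub, map_pow] using this
  have h2' : t ^ 2 - q ≠ 0 := by
    have := key (MvPolynomial.X 1 ^ 2 - MvPolynomial.X 0) (by simp; norm_num)
    simpa only [q, t, map_sub, map_pow] using this
  have h3 : q ^ 3 - t ≠ 0 := by
    have := key (MvPolynomial.X 0 ^ 3 - MvPolynomial.X 1) (by simp; norm_num)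
    simpa only [q, t, map_sub, map_pow] using this
  have h3' : t ^ 3 - q ≠ 0 := by
    have := key (MvPolynomial.X 1 ^ 3 - MvPolynomial.X 0) (by simp; norm_num)
    simpa only [q, t, map_sub, map_pow] using this
  refine ⟨by simp [F₁], fun a _ => ?_, fun a b _ _ => ?_⟩
  · unfold F₂
    rw [H₂_neg_one a q t hq ht h2, H₂_neg_one a t q ht hq h2']
    simp
  · unfold F₃
    rw [H₃_neg_one a b q t hq ht h1 hp h2 h3, H₃_neg_one a b t q ht hq h1' hp' h2' h3']
    simp
end
end
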